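/- Let d ≥ 2, R > 0, D ≥ 0, and let φ : B_R^d → ℝ be a C² function whose second derivative has operator norm at most D at every point. There is a constant C depending only on d and D such that: for every ε with 0 < ε ≤ (7(1+√2)/√2)·D·(d−1)·R^(3/2)·(R(1 − 1/√2))^(1/2), there exist a fully-connected ReLU network F : ℝ^(d+1) → ℝ of width d+1 and depth at most C·(R²/ε)^(d+1) and a continuous function φ̂ : B_R^d → ℝ such that the zero set {(x,y) ∈ B_R^d × ℝ : F(x,y) = 0} equals the graph of φ̂ and sup_{x ∈ B_R^d} |φ(x) − φ̂(x)| ≤ ε. -/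

import Mathlib

/-!
The idea: a ReLU layer that is the identity in all but one affine coordinate acts on `ℝ^(d+1)` as
a fold `z ↦ z + max (c - λ z) 0 • w` with `λ w = 1`: the half-space `λ z ≤ c` is collapsed along
`w` onto its boundary (`NetRep.fold`). In the variables `(x, y)`, take a unit vector `n`, a height
`c` and a slope `s`; such a fold sends `(x, y)` to `(x - t n, y - s t)`, with
`t = max (⟪x, n⟫ - c) 0`. It cuts the cap `⟪x, n⟫ > c` off the domain of `x`, and the zero contour
over that cap is the one over the bounding hyperplane, extended linearly with slope `s` in the
direction `n`. After a list of cuts the point `x` has moved to `runPt l x`, and the zero contour of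
an affine function of the final state is the graph of
`x ↦ φ 0 + φ' 0 (runPt l x) + runHt l x` (`network_of_cuts`). One preliminary layer clips `y` from
below, so that the remaining coordinates can be shifted into the positive range.

The ball is peeled from outside in. With `δ = R / k²`, the peel of the ball of radius `r` cuts the
caps `⟪x, n⟫ > r - δ` for all `n` in a net of the unit sphere with `O(k^(d-1))` points
(`exists_net`) and maps the ball into the one of radius `r - δ / 4` (`peel_shrinks`). Hence `O(k²)`
peels, that is `O(k^(d+1))` cuts, reach the radius `2 δ`. With slope `φ' (c n) n` a cut of depth
`t` costs an error `D ρ t`, where `ρ = O(R / k)` bounds the size of the cap (`cut_error`); as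
`t ≤ 2 (‖x‖ - ‖x - t n‖)` (`cutDepth_le`), the errors telescope and add up to `O(D R² / k)`,
whatever the number of cuts (`approx_error`). Choosing `k` of order `D R² / ε` gives the theorem;
the upper bound on `ε` is what makes the roundings in `k` harmless (`size_bound`).
-/

open scoped RealInnerProductSpace

/-- The componentwise ReLU layer `x ↦ ReLU (A x + b)`. -/
noncomputable def reluLayer {n : ℕ} (A : Matrix (Fin n) (Fin n) ℝ) (b : Fin n → ℝ) :
    (Fin n → ℝ) → (Fin n → ℝ) :=
  fun x i => max (A.mulVec x i + b i) 0

/-- `iterComp f N = f (N-1) ∘ ⋯ ∘ f 1 ∘ f 0`. -/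
def iterComp {α : Type*} (f : ℕ → α → α) : ℕ → α → α
  | 0 => id
  | (k+1) => fun x => f k (iterComp f k x)

/-! ### Maps computed by ReLU networks -/

/-- Every affine map followed by the componentwise ReLU is a layer. -/
theorem reluLayer_toMatrix {m : ℕ} (T : (Fin m → ℝ) →ᵃ[ℝ] (Fin m → ℝ)) (z : Fin m → ℝ) :
    reluLayer (LinearMap.toMatrix' T.linear) (T 0) z = fun i => max (T z i) 0 := by
  funext i
  have h : T z = T.linear z + T 0 := by
    have := T.linearMap_vsub z 0
    simp only [vsub_eq_sub, sub_zero] at this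
    rw [this]; abel
  simp only [reluLayer]
  rw [LinearMap.toMatrix'_mulVec, h]
  rfl

theorem iterComp_congr {α : Type*} {f g : ℕ → α → α} {N : ℕ} (h : ∀ k < N, f k = g k) (x : α) :
    iterComp f N x = iterComp g N x := by
  induction N with
  | zero => rfl
  | succ N ih =>
    simp only [iterComp]
    rw [ih (fun k hk => h k (by omega)), h N (by omega)]

/-- `NetRep e N f`: on inputs encoded by `e`, the map `f` is computed by `N` ReLU layers of width `m`
followed by an affine map. The domain `X` is arbitrary, so that `f` may be required to agree with the
network on a restricted set of inputs only. -/
def NetRep {X : Type*} {m : ℕ} (e : X → Fin m → ℝ) (N : ℕ) (f : X → Fin m → ℝ) : Prop :=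
  ∃ (A : ℕ → Matrix (Fin m) (Fin m) ℝ) (b : ℕ → Fin m → ℝ)
    (Q : (Fin m → ℝ) →ᵃ[ℝ] (Fin m → ℝ)),
    ∀ p, f p = Q (iterComp (fun k => reluLayer (A k) (b k)) N (e p))

theorem NetRep.base {X : Type*} {m : ℕ} (e : X → Fin m → ℝ) : NetRep e 0 e :=
  ⟨fun _ => 0, fun _ => 0, AffineMap.id ℝ _, fun _ => rfl⟩

theorem NetRep.layer {X : Type*} {m : ℕ} {e : X → Fin m → ℝ} {N : ℕ} {f : X → Fin m → ℝ}
    (hf : NetRep e N f) (T Q' : (Fin m → ℝ) →ᵃ[ℝ] (Fin m → ℝ)) {g : X → Fin m → ℝ}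
    (hg : ∀ p, g p = Q' (fun i => max (T (f p) i) 0)) : NetRep e (N + 1) g := by
  obtain ⟨A, b, Q, h⟩ := hf
  refine ⟨Function.update A N (LinearMap.toMatrix' (T.comp Q).linear),
    Function.update b N ((T.comp Q) 0), Q', fun p => ?_⟩
  rw [hg, h]
  simp only [iterComp, Function.update_self, reluLayer_toMatrix]
  rw [iterComp_congr (g := fun k => reluLayer (Function.update A N _ k) (Function.update b N _ k))]
  · rfl
  · intro k hk
    rw [Function.update_of_ne hk.ne, Function.update_of_ne hk.ne]

/-- One more layer computes the fold along `w` of the half-space `lam z ≤ c` onto its boundary. The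
coordinates used are `lam z - c`, in place of the coordinate `i`, and `z j - (w j / w i) * z i` for
`j ≠ i`, which are constant along `w`; the shift `B` keeps the latter nonnegative on the states that
occur, so that ReLU acts on the first one only. -/
theorem NetRep.fold {X : Type*} {m : ℕ} {e : X → Fin m → ℝ} {N : ℕ} {f : X → Fin m → ℝ}
    (hf : NetRep e N f) (lam : (Fin m → ℝ) →ₗ[ℝ] ℝ) (w : Fin m → ℝ) (hw : lam w = 1) (c : ℝ)
    (i : Fin m) (hi : w i ≠ 0) (B : ℝ) (hB : ∀ p j, j ≠ i → 0 ≤ f p j - w j / w i * f p i + B) :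
    NetRep e (N + 1) (fun p => f p + max (c - lam (f p)) 0 • w) := by
  let T : (Fin m → ℝ) →ᵃ[ℝ] (Fin m → ℝ) :=
    (LinearMap.pi (fun j => if j = i then lam else
      LinearMap.proj j - (w j / w i) • LinearMap.proj i)).toAffineMap +
      AffineMap.const ℝ _ (fun j => if j = i then -c else B)
  -- `Z` forgets the coordinate `i`; `Q'` inverts the change of coordinates `T`.
  let B' : Fin m → ℝ := fun j => if j = i then 0 else B
  let Z : (Fin m → ℝ) →ₗ[ℝ] (Fin m → ℝ) :=
    LinearMap.pi (fun j => if j = i then 0 else LinearMap.proj j)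
  let Q' : (Fin m → ℝ) →ᵃ[ℝ] (Fin m → ℝ) :=
    (Z + (LinearMap.proj i - lam ∘ₗ Z).smulRight w).toAffineMap +
      AffineMap.const ℝ _ ((c + lam B') • w - B')
  refine hf.layer T Q' fun p => ?_
  set z := f p with hz
  set u : Fin m → ℝ := fun j => max (T z j) 0 with hu
  have hui : u i = max (lam z - c) 0 := by
    simp [hu, T, sub_eq_add_neg]
  have hZ : Z u = z - (z i / w i) • w + B' := by
    funext j
    by_cases hj : j = i
    · subst hj
      simp [Z, B', hi]
    · have := hB p j hj
      have h1 : u j = z j - w j / w i * z i + B := by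
        simp only [hu]
        rw [show T z j = z j - w j / w i * z i + B by simp [T, hj]]
        exact max_eq_left this
      simp [Z, B', hj, h1]
      ring
  have hQ : Q' u = Z u + (u i - lam (Z u)) • w + ((c + lam B') • w - B') := by
    simp [Q']
  rw [hQ, hui, hZ]
  simp only [map_add, map_sub, map_smul, hw, smul_eq_mul, mul_one]
  have h3 : max (c - lam z) 0 = max (lam z - c) 0 - (lam z - c) := by
    rcases le_total (lam z) c with h | h
    · rw [max_eq_left (by linarith), max_eq_right (by linarith)]; ring
    · rw [max_eq_right (by linarith), max_eq_left (by linarith)]; ring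
  rw [h3]
  module


/-! ### Cutting caps off a ball -/

section Geometry
variable {E : Type*} [NormedAddCommGroup E] [InnerProductSpace ℝ E]

/-- The depth of `x` in the cap `{x | c < ⟪x, n⟫}`, and zero outside of the cap. -/
noncomputable def cutDepth (n : E) (c : ℝ) (x : E) : ℝ := max (⟪x, n⟫ - c) 0
/-- For a unit vector `n`, the orthogonal projection onto the half-space `{x | ⟪x, n⟫ ≤ c}`. -/
noncomputable def cutProj (n : E) (c : ℝ) (x : E) : E := x - cutDepth n c x • n
/-- The position of `x` after the successive cuts of a list of triples `(n, c, s)`: direction, height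
and slope. The slopes do not matter here. -/
noncomputable def runPt : List (E × ℝ × ℝ) → E → E
  | [], x => x
  | q :: l, x => runPt l (cutProj q.1 q.2.1 x)
/-- The total of slope times depth collected by `x` along the successive cuts. -/
noncomputable def runHt : List (E × ℝ × ℝ) → E → ℝ
  | [], _ => 0
  | q :: l, x => q.2.2 * cutDepth q.1 q.2.1 x + runHt l (cutProj q.1 q.2.1 x)

theorem cutDepth_nonneg (n : E) (c : ℝ) (x : E) : 0 ≤ cutDepth n c x := le_max_right _ _

theorem continuous_cutDepth (n : E) (c : ℝ) : Continuous (cutDepth n c) := by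
  unfold cutDepth; fun_prop

theorem continuous_cutProj (n : E) (c : ℝ) : Continuous (cutProj n c) := by
  have := continuous_cutDepth n c
  unfold cutProj; fun_prop

theorem continuous_runPt (l : List (E × ℝ × ℝ)) : Continuous (runPt l) := by
  induction l with
  | nil => exact continuous_id
  | cons q l ih => exact ih.comp (continuous_cutProj _ _)

theorem continuous_runHt (l : List (E × ℝ × ℝ)) : Continuous (runHt l) := by
  induction l with
  | nil => exact continuous_const
  | cons q l ih =>
    exact (continuous_const.mul (continuous_cutDepth _ _)).add (ih.comp (continuous_cutProj _ _))

theorem runPt_append (l l' : List (E × ℝ × ℝ)) (x : E) :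
    runPt (l ++ l') x = runPt l' (runPt l x) := by
  induction l generalizing x with
  | nil => rfl
  | cons q l ih => exact ih _

theorem runHt_append (l l' : List (E × ℝ × ℝ)) (x : E) :
    runHt (l ++ l') x = runHt l x + runHt l' (runPt l x) := by
  induction l generalizing x with
  | nil => simp [runHt, runPt]
  | cons q l ih => simp [runHt, runPt, ih, add_assoc]

theorem cutProj_normSq {n : E} (hn : ‖n‖ = 1) (c : ℝ) (x : E) :
    ‖x‖ ^ 2 - ‖cutProj n c x‖ ^ 2 = cutDepth n c x * (2 * c + cutDepth n c x) := by
  have h1 : ‖cutProj n c x‖ ^ 2 =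
      ‖x‖ ^ 2 - 2 * (cutDepth n c x * ⟪x, n⟫) + cutDepth n c x ^ 2 := by
    unfold cutProj
    rw [norm_sub_sq_real, real_inner_smul_right, norm_smul, hn, mul_one, Real.norm_eq_abs, sq_abs]
  rw [h1]
  unfold cutDepth
  rcases le_total (⟪x, n⟫ - c) 0 with h | h
  · rw [max_eq_right h]; ring
  · rw [max_eq_left h]; ring

theorem cutProj_norm_le {n : E} (hn : ‖n‖ = 1) {c : ℝ} (hc : 0 ≤ c) (x : E) :
    ‖cutProj n c x‖ ≤ ‖x‖ := by
  have h := cutProj_normSq hn c x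
  have h0 := cutDepth_nonneg n c x
  have : 0 ≤ cutDepth n c x * (2 * c + cutDepth n c x) := by positivity
  exact le_of_sq_le_sq (by linarith) (norm_nonneg _)

/-- The depth of a cut is controlled by the decrease of the norm, which makes the sum over any number
of cuts telescope. -/
theorem cutDepth_le {n : E} (hn : ‖n‖ = 1) {c r : ℝ} (hc : 0 < c) (hr : r ≤ 2 * c) {x : E}
    (hx : ‖x‖ ≤ r) : cutDepth n c x ≤ 2 * (‖x‖ - ‖cutProj n c x‖) := by
  have h := cutProj_normSq hn c x
  have h0 := cutDepth_nonneg n c x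
  have h1 := cutProj_norm_le hn hc.le x
  have h2 := norm_nonneg (cutProj n c x)
  have h3 : (‖x‖ - ‖cutProj n c x‖) * (‖x‖ + ‖cutProj n c x‖)
      ≤ (‖x‖ - ‖cutProj n c x‖) * (4 * c) :=
    mul_le_mul_of_nonneg_left (by linarith) (by linarith)
  have h4 : c * (2 * cutDepth n c x) ≤ c * (4 * (‖x‖ - ‖cutProj n c x‖)) := by nlinarith
  have := le_of_mul_le_mul_left h4 hc
  linarith

/-- The cuts at height `c` in all directions of `S`, each with slope the derivative of the
approximated function at the centre `c • n` of the bottom of the cap. -/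
noncomputable def peel (φ' : E → E →L[ℝ] ℝ) (c : ℝ) (S : List E) : List (E × ℝ × ℝ) :=
  S.map fun n => (n, c, φ' (c • n) n)

theorem peel_norm_le (φ' : E → E →L[ℝ] ℝ) {c : ℝ} (hc : 0 ≤ c) {S : List E}
    (hS : ∀ n ∈ S, ‖n‖ = 1) (x : E) : ‖runPt (peel φ' c S) x‖ ≤ ‖x‖ := by
  induction S generalizing x with
  | nil => exact le_rfl
  | cons n S ih =>
    exact (ih (fun m hm => hS m (List.mem_cons_of_mem _ hm)) _).trans
      (cutProj_norm_le (hS n List.mem_cons_self) hc x)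

/-- A peel decreases the squared norm at least as much as a single cut in any one direction `m ∈ S`
would: cuts made before that one can lower `⟪x, m⟫` at most by their total depth, and they decrease
the squared norm by `2 * c` times that depth. -/
theorem peel_normSq (φ' : E → E →L[ℝ] ℝ) {c : ℝ} (hc : 0 ≤ c) {S : List E}
    (hS : ∀ n ∈ S, ‖n‖ = 1) {m : E} (hm : m ∈ S) (x : E) :
    ‖runPt (peel φ' c S) x‖ ^ 2 ≤ ‖x‖ ^ 2 - 2 * c * (⟪x, m⟫ - c) := by
  induction S generalizing x with
  | nil => simp at hm
  | cons n S ih =>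
    have hn := hS n List.mem_cons_self
    have hS' : ∀ n ∈ S, ‖n‖ = 1 := fun m hm => hS m (List.mem_cons_of_mem _ hm)
    have h1 := cutProj_normSq hn c x
    have h0 := cutDepth_nonneg n c x
    change ‖runPt (peel φ' c S) (cutProj n c x)‖ ^ 2 ≤ _
    rcases List.mem_cons.1 hm with rfl | hm'
    · have h2 := peel_norm_le φ' hc hS' (cutProj m c x)
      have h3 : ‖runPt (peel φ' c S) (cutProj m c x)‖ ^ 2 ≤ ‖cutProj m c x‖ ^ 2 := by gcongr
      have h4 : ⟪x, m⟫ - c ≤ cutDepth m c x := le_max_left _ _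
      nlinarith [mul_le_mul_of_nonneg_left h4 hc]
    · have h2 := ih hS' hm' (cutProj n c x)
      have h3 : ⟪x, m⟫ - cutDepth n c x ≤ ⟪cutProj n c x, m⟫ := by
        unfold cutProj
        rw [inner_sub_left, real_inner_smul_left]
        have : ⟪n, m⟫ ≤ 1 := by
          have := real_inner_le_norm n m
          rwa [hn, hS m hm, one_mul] at this
        nlinarith
      nlinarith [mul_le_mul_of_nonneg_left h3 hc]

/-- If every direction is within the tolerance `α` of one in `S`, a peel of thickness `δ` decreases
the radius of a ball by at least `δ / 4`. -/
theorem peel_shrinks (φ' : E → E →L[ℝ] ℝ) {r δ α : ℝ} (hδ : 0 < δ) (hr : 2 * δ ≤ r)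
    (hα : 0 ≤ α) (hαr : α * r ≤ δ / 2) {S : List E} (hS : ∀ n ∈ S, ‖n‖ = 1)
    (hnet : ∀ x : E, x ≠ 0 → ∃ n ∈ S, (1 - α) * ‖x‖ ≤ ⟪x, n⟫) {x : E} (hx : ‖x‖ ≤ r) :
    ‖runPt (peel φ' (r - δ) S) x‖ ≤ r - δ / 4 := by
  have hc : 0 ≤ r - δ := by linarith
  rcases le_or_gt ‖x‖ (r - δ / 4) with h | h
  · exact (peel_norm_le φ' hc hS x).trans h
  · obtain ⟨m, hm, hxm⟩ := hnet x (by rw [← norm_pos_iff]; linarith)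
    have h1 := peel_normSq φ' hc hS hm x
    have h2 : ‖x‖ - δ / 2 - (r - δ) ≤ ⟪x, m⟫ - (r - δ) := by
      have : α * ‖x‖ ≤ α * r := by gcongr
      linarith
    have h3 := mul_le_mul_of_nonneg_left h2 hc
    refine le_of_sq_le_sq ?_ (by linarith)
    -- With `u = r - ‖x‖ < δ / 4` the claim is polynomial in `r`, `δ` and `u`.
    obtain ⟨u, hu⟩ : ∃ u, ‖x‖ = r - u := ⟨r - ‖x‖, by ring⟩
    rw [hu] at h1 h3 h hx
    nlinarith

theorem taylor_bound {R D : ℝ} {φ : E → ℝ} {φ' : E → E →L[ℝ] ℝ}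
    (hφ : ∀ x ∈ Metric.ball (0 : E) R, HasFDerivWithinAt φ (φ' x) (Metric.ball 0 R) x)
    (hD : 0 ≤ D)
    (hφ' : ∀ x ∈ Metric.ball (0 : E) R, ∀ y ∈ Metric.ball (0 : E) R,
      ‖φ' x - φ' y‖ ≤ D * ‖x - y‖)
    {p x y : E} {ρ : ℝ} (hp : p ∈ Metric.ball (0 : E) R) (hx : x ∈ Metric.ball (0 : E) R)
    (hy : y ∈ Metric.ball (0 : E) R) (hxp : ‖x - p‖ ≤ ρ) (hyp : ‖y - p‖ ≤ ρ) :
    |φ x - φ y - φ' p (x - y)| ≤ D * ρ * ‖x - y‖ := by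
  have hconv : Convex ℝ (Metric.ball (0 : E) R ∩ Metric.closedBall p ρ) :=
    (convex_ball _ _).inter (convex_closedBall _ _)
  have := hconv.norm_image_sub_le_of_norm_hasFDerivWithin_le' (f := φ) (f' := φ') (φ := φ' p)
    (C := D * ρ) (x := y) (y := x) (fun z hz => (hφ z hz.1).mono Set.inter_subset_left)
    (fun z hz => (hφ' z hz.1 p hp).trans (by
      have := hz.2
      rw [mem_closedBall_iff_norm] at this
      gcongr)) ⟨hy, mem_closedBall_iff_norm.2 hyp⟩ ⟨hx, mem_closedBall_iff_norm.2 hxp⟩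
  simpa using this

/-- The error made by one cut. Both `x` and its projection lie within `ρ` of `c • n`, where the slope is
taken, because `r ^ 2 - c ^ 2` is the squared radius of the bottom of the cap. -/
theorem cut_error {R D : ℝ} {φ : E → ℝ} {φ' : E → E →L[ℝ] ℝ}
    (hφ : ∀ x ∈ Metric.ball (0 : E) R, HasFDerivWithinAt φ (φ' x) (Metric.ball 0 R) x)
    (hD : 0 ≤ D)
    (hφ' : ∀ x ∈ Metric.ball (0 : E) R, ∀ y ∈ Metric.ball (0 : E) R,
      ‖φ' x - φ' y‖ ≤ D * ‖x - y‖)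
    {n x : E} {c r ρ : ℝ} (hn : ‖n‖ = 1) (hc : 0 < c) (hr : r ≤ 2 * c) (hcR : c < R)
    (hρ : 0 ≤ ρ) (hcap : r ^ 2 - c ^ 2 ≤ ρ ^ 2) (hx : ‖x‖ ≤ r) (hxR : ‖x‖ < R) :
    |φ x - φ (cutProj n c x) - φ' (c • n) n * cutDepth n c x| ≤
      2 * D * ρ * (‖x‖ - ‖cutProj n c x‖) := by
  have hle := cutProj_norm_le hn hc.le x
  have hdep := cutDepth_le hn hc hr hx
  have h0 := cutDepth_nonneg n c x
  have hdiff : x - cutProj n c x = cutDepth n c x • n := by unfold cutProj; abel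
  rcases h0.eq_or_lt with h | h
  · have : cutProj n c x = x := by unfold cutProj; rw [← h]; simp
    rw [this, ← h]; simp
  · have hin : cutDepth n c x = ⟪x, n⟫ - c := by
      unfold cutDepth at h ⊢
      rcases lt_max_iff.1 h with h | h
      · exact max_eq_left h.le
      · exact absurd h (lt_irrefl _)
    have h1 : ‖x - c • n‖ ≤ ρ := by
      refine le_of_sq_le_sq ?_ hρ
      rw [norm_sub_sq_real, real_inner_smul_right, norm_smul, hn, mul_one, Real.norm_eq_abs, sq_abs]
      have : ‖x‖ ^ 2 ≤ r ^ 2 := by gcongr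
      nlinarith
    have h2 : ‖cutProj n c x - c • n‖ ≤ ρ := by
      refine le_of_sq_le_sq ?_ hρ
      rw [norm_sub_sq_real, real_inner_smul_right, norm_smul, hn, mul_one, Real.norm_eq_abs, sq_abs]
      have h3 : ⟪cutProj n c x, n⟫ = c := by
        unfold cutProj
        rw [inner_sub_left, real_inner_smul_left, real_inner_self_eq_norm_sq, hn, hin]; ring
      have : ‖cutProj n c x‖ ^ 2 ≤ r ^ 2 := by gcongr; exact hle.trans hx
      rw [h3]
      nlinarith
    have := taylor_bound hφ hD hφ' (p := c • n) (x := x) (y := cutProj n c x) (ρ := ρ)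
      (by rw [mem_ball_zero_iff, norm_smul, hn, Real.norm_eq_abs, abs_of_pos hc]; linarith)
      (by rwa [mem_ball_zero_iff]) (by rw [mem_ball_zero_iff]; linarith) h1 h2
    rw [hdiff, map_smul, norm_smul, hn, mul_one, Real.norm_eq_abs, abs_of_pos h, smul_eq_mul,
      mul_comm (cutDepth n c x)] at this
    refine this.trans ?_
    have := mul_le_mul_of_nonneg_left hdep (mul_nonneg hD hρ)
    linarith

theorem peel_error {R D : ℝ} {φ : E → ℝ} {φ' : E → E →L[ℝ] ℝ}
    (hφ : ∀ x ∈ Metric.ball (0 : E) R, HasFDerivWithinAt φ (φ' x) (Metric.ball 0 R) x)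
    (hD : 0 ≤ D)
    (hφ' : ∀ x ∈ Metric.ball (0 : E) R, ∀ y ∈ Metric.ball (0 : E) R,
      ‖φ' x - φ' y‖ ≤ D * ‖x - y‖)
    {c r ρ : ℝ} {S : List E} (hS : ∀ n ∈ S, ‖n‖ = 1) (hc : 0 < c) (hr : r ≤ 2 * c) (hcR : c < R)
    (hρ : 0 ≤ ρ) (hcap : r ^ 2 - c ^ 2 ≤ ρ ^ 2) {x : E} (hx : ‖x‖ ≤ r) (hxR : ‖x‖ < R) :
    |φ x - φ (runPt (peel φ' c S) x) - runHt (peel φ' c S) x| ≤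
      2 * D * ρ * (‖x‖ - ‖runPt (peel φ' c S) x‖) := by
  induction S generalizing x with
  | nil => simp [peel, runPt, runHt]
  | cons n S ih =>
    have hn := hS n List.mem_cons_self
    have hle := cutProj_norm_le hn hc.le x
    have h1 := cut_error hφ hD hφ' hn hc hr hcR hρ hcap hx hxR
    have h2 := ih (fun m hm => hS m (List.mem_cons_of_mem _ hm)) (hle.trans hx)
      (hle.trans_lt hxR)
    change |φ x - φ (runPt (peel φ' c S) (cutProj n c x)) -
      (φ' (c • n) n * cutDepth n c x + runHt (peel φ' c S) (cutProj n c x))| ≤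
      2 * D * ρ * (‖x‖ - ‖runPt (peel φ' c S) (cutProj n c x)‖)
    rw [abs_le] at *
    constructor <;> linarith [h1.1, h1.2, h2.1, h2.2]

/-- The first `j` peels counted from the inside: the outermost one cuts the ball of radius
`2 * δ + j * (δ / 4)` at depth `δ`, each following one the ball whose radius is smaller by `δ / 4`. -/
noncomputable def peels (φ' : E → E →L[ℝ] ℝ) (δ : ℝ) (S : List E) : ℕ → List (E × ℝ × ℝ)
  | 0 => []
  | j + 1 => peel φ' (2 * δ + (j + 1) * (δ / 4) - δ) S ++ peels φ' δ S j

theorem peels_length (φ' : E → E →L[ℝ] ℝ) (δ : ℝ) (S : List E) (j : ℕ) :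
    (peels φ' δ S j).length = j * S.length := by
  induction j with
  | zero => simp [peels]
  | succ j ih => simp [peels, ih, peel]; ring

theorem peels_unit (φ' : E → E →L[ℝ] ℝ) (δ : ℝ) {S : List E} (hS : ∀ n ∈ S, ‖n‖ = 1) (j : ℕ) :
    ∀ q ∈ peels φ' δ S j, ‖q.1‖ = 1 := by
  induction j with
  | zero => simp [peels]
  | succ j ih =>
    intro q hq
    rcases List.mem_append.1 hq with h | h
    · obtain ⟨n, hn, rfl⟩ := List.mem_map.1 h
      exact hS n hn
    · exact ih q h

theorem peels_spec {R D : ℝ} {φ : E → ℝ} {φ' : E → E →L[ℝ] ℝ}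
    (hφ : ∀ x ∈ Metric.ball (0 : E) R, HasFDerivWithinAt φ (φ' x) (Metric.ball 0 R) x)
    (hD : 0 ≤ D)
    (hφ' : ∀ x ∈ Metric.ball (0 : E) R, ∀ y ∈ Metric.ball (0 : E) R,
      ‖φ' x - φ' y‖ ≤ D * ‖x - y‖)
    {δ α ρ : ℝ} {S : List E} (hS : ∀ n ∈ S, ‖n‖ = 1) (hδ : 0 < δ) (hα : 0 ≤ α)
    (hαR : α * R ≤ δ / 2) (hρ : 0 ≤ ρ) (hδρ : 2 * R * δ ≤ ρ ^ 2)
    (hnet : ∀ x : E, x ≠ 0 → ∃ n ∈ S, (1 - α) * ‖x‖ ≤ ⟪x, n⟫) (j : ℕ)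
    (hj : 2 * δ + j * (δ / 4) ≤ R) {x : E} (hx : ‖x‖ ≤ 2 * δ + j * (δ / 4)) (hxR : ‖x‖ < R) :
    ‖runPt (peels φ' δ S j) x‖ ≤ 2 * δ ∧ ‖runPt (peels φ' δ S j) x‖ ≤ ‖x‖ ∧
    |φ x - φ (runPt (peels φ' δ S j) x) - runHt (peels φ' δ S j) x| ≤
      2 * D * ρ * (‖x‖ - ‖runPt (peels φ' δ S j) x‖) := by
  induction j generalizing x with
  | zero => simpa [peels, runPt, runHt] using hx
  | succ j ih =>
    push_cast at hj hx
    simp only [peels, runPt_append, runHt_append]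
    set r : ℝ := 2 * δ + (j + 1) * (δ / 4) with hr
    have hj0 : (0 : ℝ) ≤ j * (δ / 4) := by positivity
    have hr2 : 2 * δ ≤ r := by rw [hr]; linarith
    have h1 := peel_norm_le φ' (c := r - δ) (by linarith) hS x
    have h2 := peel_shrinks φ' hδ hr2 hα
      ((mul_le_mul_of_nonneg_left hj hα).trans hαR) hS hnet hx
    have h3 := peel_error hφ hD hφ' hS (c := r - δ) (r := r) (by linarith) (by linarith)
      (by linarith) hρ (by nlinarith) hx hxR
    obtain ⟨h4, h5, h6⟩ := ih (x := runPt (peel φ' (r - δ) S) x) (by linarith)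
      (h2.trans (by rw [hr]; linarith)) (h1.trans_lt hxR)
    refine ⟨h4, h5.trans h1, ?_⟩
    rw [abs_le] at *
    constructor <;> linarith [h3.1, h3.2, h6.1, h6.2]

/-- The `4 * k ^ 2 - 8` peels of thickness `R / k ^ 2` lead from radius `R` exactly to radius
`2 * R / k ^ 2`, where the affine approximation at the centre takes over. -/
theorem approx_error {R D : ℝ} {φ : E → ℝ} {φ' : E → E →L[ℝ] ℝ} (hR : 0 < R)
    (hφ : ∀ x ∈ Metric.ball (0 : E) R, HasFDerivWithinAt φ (φ' x) (Metric.ball 0 R) x)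
    (hD : 0 ≤ D)
    (hφ' : ∀ x ∈ Metric.ball (0 : E) R, ∀ y ∈ Metric.ball (0 : E) R,
      ‖φ' x - φ' y‖ ≤ D * ‖x - y‖)
    {k : ℕ} (hk : 2 ≤ k) {S : List E} (hS : ∀ n ∈ S, ‖n‖ = 1)
    (hnet : ∀ x : E, x ≠ 0 → ∃ n ∈ S, (1 - 1 / (2 * (k : ℝ) ^ 2)) * ‖x‖ ≤ ⟪x, n⟫)
    {x : E} (hx : ‖x‖ < R) :
    |φ x - (φ 0 + φ' 0 (runPt (peels φ' (R / k ^ 2) S (4 * k ^ 2 - 8)) x) +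
      runHt (peels φ' (R / k ^ 2) S (4 * k ^ 2 - 8)) x)| ≤ 3 * D * R ^ 2 / k := by
  have hk' : (2 : ℝ) ≤ k := by exact_mod_cast hk
  have hk0 : (0 : ℝ) < k := by linarith
  set δ : ℝ := R / k ^ 2 with hδ
  have hδ0 : 0 < δ := by positivity
  have hδk : δ * k ^ 2 = R := by rw [hδ]; field_simp
  -- The caps have radius at most `√(2 * R * δ) = √2 * R / k`; `3 / 2` replaces `√2`.
  set ρ : ℝ := 3 / 2 * R / k with hρ
  have hρ0 : 0 < ρ := by positivity
  have hρk : ρ * k = 3 / 2 * R := by rw [hρ]; field_simp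
  have hJ : 2 * δ + ((4 * k ^ 2 - 8 : ℕ) : ℝ) * (δ / 4) = R := by
    rw [Nat.cast_sub (by nlinarith)]
    push_cast
    linarith
  obtain ⟨h1, h2, h3⟩ := peels_spec hφ hD hφ' (δ := δ) (α := 1 / (2 * (k : ℝ) ^ 2)) (ρ := ρ) hS hδ0
    (by positivity) (by rw [hδ]; apply le_of_eq; field_simp) hρ0.le
    (by
      have : ρ ^ 2 = 9 / 4 * R * δ := by rw [hρ, hδ]; field_simp; norm_num
      rw [this]; nlinarith [mul_pos hR hδ0]) hnet (4 * k ^ 2 - 8) hJ.le (x := x)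
      (by rw [hJ]; exact hx.le) hx
  set l := peels φ' δ S (4 * k ^ 2 - 8)
  have h4 := taylor_bound hφ hD hφ' (p := 0) (x := runPt l x) (y := 0) (ρ := 2 * δ)
    (by simpa using hR) (by rw [mem_ball_zero_iff]; linarith) (by simpa using hR)
    (by simpa using h1) (by simpa using hδ0.le)
  simp only [sub_zero] at h4
  have h5 : 2 * δ ≤ 2 * ρ := by
    rw [hδ, hρ]
    have : R / (k : ℝ) ^ 2 ≤ R / k := by
      apply div_le_div_of_nonneg_left hR.le hk0; nlinarith
    have h6 : 3 / 2 * R / k = 3 / 2 * (R / k) := by ring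
    have : 0 < R / k := by positivity
    linarith
  have h6 : D * (2 * δ) * ‖runPt l x‖ ≤ 2 * D * ρ * ‖runPt l x‖ := by
    have := mul_le_mul_of_nonneg_left h5 hD
    have := mul_le_mul_of_nonneg_right this (norm_nonneg (runPt l x))
    linarith
  have h7 : 2 * D * ρ * ‖x‖ ≤ 3 * D * R ^ 2 / k := by
    have : 3 * D * R ^ 2 / k = 2 * D * ρ * R := by rw [hρ]; field_simp
    rw [this]
    exact mul_le_mul_of_nonneg_left hx.le (by positivity)
  rw [abs_le] at *
  constructor <;> linarith [h3.1, h3.2, h4.1, h4.2]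

end Geometry

/-! ### A net of the unit sphere -/

/-- The size of a pair of opposite faces of the integer cube with half-side `m`. -/
theorem grid_card (d m : ℕ) (i : Fin d) :
    (Fintype.piFinset (Function.update (fun _ : Fin d => Finset.Icc (-(m : ℤ)) m) i
      {-(m : ℤ), (m : ℤ)})).card ≤ 2 * (2 * m + 1) ^ (d - 1) := by
  rw [Fintype.card_piFinset, ← Finset.mul_prod_erase _ _ (Finset.mem_univ i),
    Function.update_self]
  refine Nat.mul_le_mul Finset.card_le_two (le_of_eq ?_)
  rw [Finset.prod_congr rfl (g := fun _ => 2 * m + 1)]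
  · simp
  · intro j hj
    rw [Function.update_of_ne (Finset.ne_of_mem_erase hj), Int.card_Icc]
    omega

/-- The normalized integer points on the boundary of the cube with half-side `m = d * k`. If the largest
coordinate of `x` is `±m`, rounding `x` gives such a point `v` with `‖x - v‖ ^ 2 ≤ d / 4`, and then
`⟪x, v⟫ ≥ ‖x‖ * ‖v‖ - d / 8` with `‖x‖, ‖v‖ ≥ m`. -/
theorem exists_net (d k : ℕ) (hd : 1 ≤ d) (hk : 1 ≤ k) :
    ∃ S : List (EuclideanSpace ℝ (Fin d)), S.length ≤ 2 * d * (2 * (d * k) + 1) ^ (d - 1) ∧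
      (∀ n ∈ S, ‖n‖ = 1) ∧
      ∀ x : EuclideanSpace ℝ (Fin d), x ≠ 0 →
        ∃ n ∈ S, (1 - 1 / (2 * (k : ℝ) ^ 2)) * ‖x‖ ≤ ⟪x, n⟫ := by
  classical
  set m : ℕ := d * k with hm
  have hm1 : 1 ≤ m := Nat.mul_pos hd hk
  let G : Fin d → Finset (Fin d → ℤ) := fun i =>
    Fintype.piFinset (Function.update (fun _ : Fin d => Finset.Icc (-(m : ℤ)) m) i
      {-(m : ℤ), (m : ℤ)})
  let vec : (Fin d → ℤ) → EuclideanSpace ℝ (Fin d) := fun v => WithLp.toLp 2 fun j => (v j : ℝ)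
  let W := Finset.univ.biUnion G
  have hcoord : ∀ (y : EuclideanSpace ℝ (Fin d)) (i : Fin d), |y i| ≤ ‖y‖ := fun y i => by
    simpa using PiLp.norm_apply_le y i
  have hvec : ∀ v ∈ W, (m : ℝ) ≤ ‖vec v‖ := by
    intro v hv
    obtain ⟨i, -, hi⟩ := Finset.mem_biUnion.1 hv
    have := Fintype.mem_piFinset.1 hi i
    rw [Function.update_self] at this
    refine le_trans (le_of_eq ?_) (hcoord (vec v) i)
    simp only [Finset.mem_insert, Finset.mem_singleton] at this
    rcases this with h | h <;> simp [vec, h]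
  have hm0 : (0 : ℝ) < m := by exact_mod_cast hm1
  refine ⟨W.toList.map fun v => (‖vec v‖⁻¹ : ℝ) • vec v, ?_, ?_, ?_⟩
  · rw [List.length_map, Finset.length_toList]
    calc W.card ≤ ∑ i : Fin d, (G i).card := Finset.card_biUnion_le
      _ ≤ ∑ i : Fin d, 2 * (2 * m + 1) ^ (d - 1) :=
        Finset.sum_le_sum fun i _ => grid_card d m i
      _ = 2 * d * (2 * m + 1) ^ (d - 1) := by simp; ring
  · intro n hn
    obtain ⟨v, hv, rfl⟩ := List.mem_map.1 hn
    have := hvec v (Finset.mem_toList.1 hv)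
    rw [norm_smul, norm_inv, norm_norm, inv_mul_cancel₀ (by linarith)]
  · have key : ∀ x : EuclideanSpace ℝ (Fin d), ∀ i, |x i| = m → (∀ j, |x j| ≤ m) →
        ∃ v ∈ W, (1 - 1 / (2 * (k : ℝ) ^ 2)) * ‖x‖ ≤ ⟪x, (‖vec v‖⁻¹ : ℝ) • vec v⟫ := by
      intro x i hi hx
      let v : Fin d → ℤ := fun j => round (x j)
      have hv : v ∈ W := by
        refine Finset.mem_biUnion.2 ⟨i, Finset.mem_univ _, Fintype.mem_piFinset.2 fun j => ?_⟩
        by_cases hj : j = i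
        · subst hj
          rw [Function.update_self]
          rcases (abs_eq hm0.le).1 hi with h | h
          · simp [v, h]
          · have : round (-(m : ℝ)) = -(m : ℤ) := by
              rw [show (-(m : ℝ)) = ((-(m : ℤ) : ℤ) : ℝ) by push_cast; rfl, round_intCast]
            simp [v, h, this]
        · rw [Function.update_of_ne hj, Finset.mem_Icc]
          have h1 := abs_le.1 (hx j)
          have h2 := abs_le.1 (abs_sub_round (x j))
          constructor
          · have : (-(m : ℤ) : ℝ) - 1 < (v j : ℝ) := by
              simp only [v]; push_cast; linarith [h2.2]
            have : (-(m : ℤ)) - 1 < v j := by exact_mod_cast this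
            omega
          · have : (v j : ℝ) < ((m : ℤ) : ℝ) + 1 := by
              simp only [v]; push_cast; linarith [h2.1]
            have : v j < (m : ℤ) + 1 := by exact_mod_cast this
            omega
      refine ⟨v, hv, ?_⟩
      have hv0 := hvec v hv
      have hx0 : (m : ℝ) ≤ ‖x‖ := hi ▸ hcoord x i
      have hdist : ‖x - vec v‖ ^ 2 ≤ d / 4 := by
        rw [EuclideanSpace.norm_sq_eq]
        calc ∑ j, ‖(x - vec v) j‖ ^ 2 ≤ ∑ j : Fin d, (1 / 4 : ℝ) := by
              refine Finset.sum_le_sum fun j _ => ?_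
              have : ‖(x - vec v) j‖ ≤ 1 / 2 := by
                simpa [vec, v] using abs_sub_round (x j)
              calc ‖(x - vec v) j‖ ^ 2 ≤ (1 / 2) ^ 2 := by gcongr
                _ = 1 / 4 := by norm_num
          _ = d / 4 := by simp; ring
      rw [norm_sub_sq_real] at hdist
      rw [real_inner_smul_right, ← div_eq_inv_mul, le_div_iff₀ (by linarith)]
      have hk0 : (0 : ℝ) < k := by exact_mod_cast hk
      have hd0 : (1 : ℝ) ≤ d := by exact_mod_cast hd
      have hmk : (m : ℝ) = d * k := by simp [hm]
      have h1 : (d : ℝ) / 8 ≤ 1 / (2 * (k : ℝ) ^ 2) * (‖x‖ * ‖vec v‖) := by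
        have h2 : (m : ℝ) * m ≤ ‖x‖ * ‖vec v‖ := by gcongr
        have h3 : 1 / (2 * (k : ℝ) ^ 2) * (m * m) = d ^ 2 / 2 := by
          rw [hmk]; field_simp
        have h4 : 1 / (2 * (k : ℝ) ^ 2) * (m * m) ≤ 1 / (2 * (k : ℝ) ^ 2) * (‖x‖ * ‖vec v‖) := by
          gcongr
        nlinarith
      nlinarith [sq_nonneg (‖x‖ - ‖vec v‖)]
    intro x hx
    have : Nonempty (Fin d) := ⟨⟨0, hd⟩⟩
    obtain ⟨i, hi⟩ := Finite.exists_max fun j => |x j|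
    have hi0 : 0 < |x i| := by
      by_contra h
      refine hx ?_
      ext j
      have := (hi j).trans (not_lt.1 h)
      simpa using this
    set t : ℝ := m / |x i| with ht
    have ht0 : 0 < t := by positivity
    have htm : t * |x i| = m := by rw [ht]; field_simp
    obtain ⟨v, hv, h⟩ := key (t • x) i
      (by rw [PiLp.smul_apply, smul_eq_mul, abs_mul, abs_of_pos ht0, htm])
      (fun j => by
        rw [PiLp.smul_apply, smul_eq_mul, abs_mul, abs_of_pos ht0, ← htm]
        exact mul_le_mul_of_nonneg_left (hi j) ht0.le)
    refine ⟨_, List.mem_map.2 ⟨v, Finset.mem_toList.2 hv, rfl⟩, ?_⟩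
    rw [norm_smul, Real.norm_eq_abs, abs_of_pos ht0, real_inner_smul_left] at h
    exact le_of_mul_le_mul_left (by linarith) ht0

/-! ### Analytic input and constants -/

theorem fderiv_data {E : Type*} [NormedAddCommGroup E] [NormedSpace ℝ E] {R D : ℝ} {φ : E → ℝ}
    (hφ : ContDiffOn ℝ 2 φ (Metric.ball 0 R))
    (hD : ∀ x ∈ Metric.ball (0 : E) R, ‖iteratedFDerivWithin ℝ 2 φ (Metric.ball 0 R) x‖ ≤ D) :
    (∀ x ∈ Metric.ball (0 : E) R,
      HasFDerivWithinAt φ (fderivWithin ℝ φ (Metric.ball 0 R) x) (Metric.ball 0 R) x) ∧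
    ∀ x ∈ Metric.ball (0 : E) R, ∀ y ∈ Metric.ball (0 : E) R,
      ‖fderivWithin ℝ φ (Metric.ball 0 R) x - fderivWithin ℝ φ (Metric.ball 0 R) y‖ ≤
        D * ‖x - y‖ := by
  have hu : UniqueDiffOn ℝ (Metric.ball (0 : E) R) := Metric.isOpen_ball.uniqueDiffOn
  refine ⟨fun x hx => (hφ.differentiableOn (by norm_num) x hx).hasFDerivWithinAt,
    fun x hx y hy => ?_⟩
  refine (convex_ball (0 : E) R).norm_image_sub_le_of_norm_fderivWithin_le (𝕜 := ℝ)
    ((hφ.fderivWithin hu (m := 1) (by norm_num)).differentiableOn (by norm_num)) ?_ hy hx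
  intro z hz
  rw [← norm_iteratedFDerivWithin_one _ (hu z hz), norm_iteratedFDerivWithin_fderivWithin hu hz]
  exact hD z hz

/-- The upper bound on `ε` gives a lower bound on `R ^ 2 / ε` depending only on `d` and `D`. -/
theorem size_bound {d : ℕ} (hd : 2 ≤ d) {D R ε : ℝ} (hR : 0 < R) (hε : 0 < ε) (hD : 0 ≤ D)
    (h : ε ≤ (7 * (1 + Real.sqrt 2) / Real.sqrt 2) * D * ((d : ℝ) - 1) *
            R ^ ((3 : ℝ) / 2) * (R * (1 - 1 / Real.sqrt 2)) ^ ((1 : ℝ) / 2)) :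
    1 ≤ 14 * D * d * (R ^ 2 / ε) := by
  have hd' : (2 : ℝ) ≤ d := by exact_mod_cast hd
  have hs : 1 ≤ Real.sqrt 2 := Real.one_le_sqrt.2 (by norm_num)
  have h1 : 7 * (1 + Real.sqrt 2) / Real.sqrt 2 ≤ 14 := by
    rw [div_le_iff₀ (by linarith)]; linarith
  have h2 : (R * (1 - 1 / Real.sqrt 2)) ^ ((1 : ℝ) / 2) ≤ R ^ ((1 : ℝ) / 2) := by
    have : 1 / Real.sqrt 2 ≤ 1 := by rw [div_le_iff₀ (by linarith)]; linarith
    have : 0 < 1 / Real.sqrt 2 := by positivity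
    apply Real.rpow_le_rpow
    · apply mul_nonneg hR.le; linarith
    · nlinarith
    · norm_num
  have h3 : R ^ ((3 : ℝ) / 2) * R ^ ((1 : ℝ) / 2) = R ^ 2 := by
    rw [← Real.rpow_add hR, ← Real.rpow_natCast]; norm_num
  have h4 : ε ≤ 14 * D * d * R ^ 2 := by
    refine h.trans ?_
    rw [← h3, ← mul_assoc]
    have h0 : 0 ≤ (R * (1 - 1 / Real.sqrt 2)) ^ ((1 : ℝ) / 2) := by
      apply Real.rpow_nonneg
      apply mul_nonneg hR.le
      have : 1 / Real.sqrt 2 ≤ 1 := by rw [div_le_iff₀ (by linarith)]; linarith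
      linarith
    have h5 : (d : ℝ) - 1 ≤ d := by linarith
    gcongr
    linarith
  rw [← mul_div_assoc, le_div_iff₀ hε, one_mul]
  exact h4

/-! ### The network attached to a list of cuts -/

/-- The point `(x, y)` in the coordinates of `ℝ^(d+1)`, the variable `y` last. -/
def embed {d : ℕ} (x : EuclideanSpace ℝ (Fin d)) (y : ℝ) : Fin (d + 1) → ℝ :=
  Fin.snoc (fun i => x i) y

/-- A cut is a fold, along `w = (-n, -s)` and with the functional `(x, y) ↦ -⟪x, n⟫`. The coordinate
replaced is one where `n` does not vanish, so that `y` need not be bounded above. -/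
theorem NetRep.cut {X : Type*} {d : ℕ} {e : X → Fin (d + 1) → ℝ} {N : ℕ}
    {x : X → EuclideanSpace ℝ (Fin d)} {y : X → ℝ} (h : NetRep e N fun p => embed (x p) (y p))
    {M : ℝ} (hx : ∀ p, ‖x p‖ ≤ M) (hy : ∀ p, -M ≤ y p) {n : EuclideanSpace ℝ (Fin d)}
    (hn : ‖n‖ = 1) (c s : ℝ) :
    NetRep e (N + 1)
      fun p => embed (cutProj n c (x p)) (y p - s * cutDepth n c (x p)) := by
  let lam : (Fin (d + 1) → ℝ) →ₗ[ℝ] ℝ := -∑ i : Fin d, n i • LinearMap.proj i.castSucc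
  have hlam : ∀ z y, lam (embed z y) = -⟪z, n⟫ := fun z y => by
    simp [lam, embed, PiLp.inner_apply]
  obtain ⟨i, hi⟩ : ∃ i, n i ≠ 0 := by
    by_contra! h0
    have : n = 0 := by ext i; simpa using h0 i
    simp [this] at hn
  let w : Fin (d + 1) → ℝ := embed (-n) (-s)
  have hw : lam w = 1 := by
    rw [hlam, inner_neg_left, real_inner_self_eq_norm_sq, hn]; norm_num
  have hcoord : ∀ p j, |x p j| ≤ M := fun p j =>
    le_trans (by simpa using PiLp.norm_apply_le (x p) j) (hx p)
  have key := h.fold lam w hw (-c) i.castSucc (by simpa [w, embed] using hi)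
    (M + (∑ j, |w j / w i.castSucc|) * M) (by
      intro p j _
      have h1 : -M ≤ embed (x p) (y p) j := by
        refine Fin.lastCases ?_ (fun j => ?_) j
        · simpa [embed] using hy p
        · simpa [embed] using (abs_le.1 (hcoord p j)).1
      have h2 : w j / w i.castSucc * embed (x p) (y p) i.castSucc ≤
          (∑ j, |w j / w i.castSucc|) * M := by
        refine (le_abs_self _).trans ?_
        rw [abs_mul]
        have h3 : |embed (x p) (y p) i.castSucc| ≤ M := by simpa [embed] using hcoord p i
        have h4 : |w j / w i.castSucc| ≤ ∑ j, |w j / w i.castSucc| :=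
          Finset.single_le_sum (f := fun j => |w j / w i.castSucc|)
            (fun j _ => abs_nonneg _) (Finset.mem_univ j)
        exact mul_le_mul h4 h3 (abs_nonneg _) ((abs_nonneg _).trans h4)
      linarith)
  convert key using 2 with p
  have ht : max (-c - lam (embed (x p) (y p))) 0 = cutDepth n c (x p) := by
    rw [hlam, cutDepth]; congr 1; ring
  rw [ht]
  funext j
  refine Fin.lastCases ?_ (fun j => ?_) j
  · simp [embed, w]; ring
  · simp only [embed, w, cutProj, Fin.snoc_castSucc, Pi.add_apply, Pi.smul_apply, PiLp.sub_apply,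
      PiLp.smul_apply, PiLp.neg_apply, smul_eq_mul]
    ring

theorem NetRep.run {X : Type*} {d : ℕ} {e : X → Fin (d + 1) → ℝ}
    (l : List (EuclideanSpace ℝ (Fin d) × ℝ × ℝ)) (hl : ∀ q ∈ l, ‖q.1‖ = 1) {N : ℕ}
    {x : X → EuclideanSpace ℝ (Fin d)} {y : X → ℝ} (h : NetRep e N fun p => embed (x p) (y p))
    {M : ℝ} (hx : ∀ p, ‖x p‖ ≤ M) (hy : ∀ p, -M ≤ y p) :
    NetRep e (N + l.length) fun p => embed (runPt l (x p)) (y p - runHt l (x p)) := by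
  induction l generalizing N x y M with
  | nil => simpa [runPt, runHt] using h
  | cons q l ih =>
    obtain ⟨n, c, s⟩ := q
    have hn : ‖n‖ = 1 := hl (n, c, s) List.mem_cons_self
    have hdep : ∀ p, cutDepth n c (x p) ≤ M + |c| := fun p => by
      have h1 := real_inner_le_norm (x p) n
      rw [hn, mul_one] at h1
      have h2 := hx p
      have h3 := norm_nonneg (x p)
      refine max_le ?_ ?_
      · linarith [neg_abs_le c]
      · linarith [abs_nonneg c]
    have key := ih (fun q hq => hl q (List.mem_cons_of_mem _ hq)) (h.cut hx hy hn c s)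
      (M := M + (1 + |s|) * (M + |c|))
      (fun p => by
        have h0 := cutDepth_nonneg n c (x p)
        have h1 : ‖cutProj n c (x p)‖ ≤ ‖x p‖ + cutDepth n c (x p) := by
          refine (norm_sub_le _ _).trans (le_of_eq ?_)
          rw [norm_smul, hn, mul_one, Real.norm_eq_abs, abs_of_nonneg h0]
        have h2 : 0 ≤ |s| * (M + |c|) := mul_nonneg (abs_nonneg _) (h0.trans (hdep p))
        linarith [hx p, hdep p])
      (fun p => by
        have h0 := cutDepth_nonneg n c (x p)
        have h1 : s * cutDepth n c (x p) ≤ |s| * (M + |c|) :=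
          mul_le_mul (le_abs_self s) (hdep p) h0 (abs_nonneg s)
        linarith [hy p, h0.trans (hdep p)])
    convert key using 1
    · simp only [List.length_cons]; omega
    · funext p
      simp only [runPt, runHt, sub_add_eq_sub_sub]

/-- Over a bounded domain of `x`, one layer clips `y` from below. -/
theorem NetRep.clip {d : ℕ} {R : ℝ} (M : ℝ)
    (X : Set (EuclideanSpace ℝ (Fin d) × ℝ)) (hX : ∀ p ∈ X, ‖p.1‖ ≤ R) :
    NetRep (fun p : X => embed p.1.1 p.1.2) 1 fun p : X => embed p.1.1 (max p.1.2 (-M)) := by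
  have key := (NetRep.base fun p : X => embed p.1.1 p.1.2).fold
    (LinearMap.proj (Fin.last d)) (embed 0 1) (by simp [embed]) (-M) (Fin.last d)
    (by simp [embed]) R (by
      intro p j hj
      obtain ⟨j, rfl⟩ := Fin.exists_castSucc_eq.2 hj
      have h1 : |p.1.1 j| ≤ R :=
        le_trans (by simpa using PiLp.norm_apply_le p.1.1 j) (hX p.1 p.2)
      have := (abs_le.1 h1).1
      simp [embed]
      linarith)
  convert key using 2 with p
  funext j
  refine Fin.lastCases ?_ (fun j => ?_) j
  · simp only [embed, Fin.snoc_last, LinearMap.proj_apply, Pi.add_apply, Pi.smul_apply,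
      smul_eq_mul, mul_one]
    rw [← max_add_add_left, max_comm, add_zero, add_sub_cancel]
  · simp [embed]

/-- For the clipped variable the zero contour is the graph of `x ↦ a + g (runPt l x) + runHt l x`. This
function is bounded on the ball, so if `y` is clipped below its range, clipping creates no new
zeros. -/
theorem network_of_cuts {d : ℕ} {R : ℝ} (l : List (EuclideanSpace ℝ (Fin d) × ℝ × ℝ))
    (hl : ∀ q ∈ l, ‖q.1‖ = 1) (a : ℝ) (g : EuclideanSpace ℝ (Fin d) →L[ℝ] ℝ) :
    ∃ (A : ℕ → Matrix (Fin (d + 1)) (Fin (d + 1)) ℝ) (b : ℕ → Fin (d + 1) → ℝ)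
      (L : (Fin (d + 1) → ℝ) →ᵃ[ℝ] ℝ),
      ∀ x ∈ Metric.ball (0 : EuclideanSpace ℝ (Fin d)) R, ∀ y : ℝ,
        L (iterComp (fun k => reluLayer (A k) (b k)) (1 + l.length)
          (Fin.snoc (fun i => x i) y)) = 0 ↔ y = a + g (runPt l x) + runHt l x := by
  have hcont : Continuous fun x => a + g (runPt l x) + runHt l x :=
    (continuous_const.add (g.continuous.comp (continuous_runPt l))).add (continuous_runHt l)
  obtain ⟨M, hM⟩ := (isCompact_closedBall (0 : EuclideanSpace ℝ (Fin d))
    R).exists_bound_of_continuousOn hcont.continuousOn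
  let X : Set (EuclideanSpace ℝ (Fin d) × ℝ) := {p | p.1 ∈ Metric.ball 0 R}
  have hX : ∀ p ∈ X, ‖p.1‖ ≤ R := fun p hp => (mem_ball_zero_iff.1 hp).le
  obtain ⟨A, b, Q, h⟩ := (NetRep.clip (M + 1) X hX).run l hl (M := max R (M + 1))
    (fun p => (hX p.1 p.2).trans (le_max_left _ _))
    (fun p => (neg_le_neg (le_max_right _ _)).trans (le_max_right _ _))
  let L₀ : (Fin (d + 1) → ℝ) →ᵃ[ℝ] ℝ :=
    (LinearMap.proj (Fin.last d) - (g : EuclideanSpace ℝ (Fin d) →ₗ[ℝ] ℝ) ∘ₗ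
      (WithLp.linearEquiv 2 ℝ (Fin d → ℝ)).symm.toLinearMap ∘ₗ
        LinearMap.funLeft ℝ ℝ Fin.castSucc).toAffineMap - AffineMap.const ℝ _ a
  have hL₀ : ∀ x y, L₀ (embed x y) = y - g x - a := fun x y => by
    have : (WithLp.linearEquiv 2 ℝ (Fin d → ℝ)).symm
        (LinearMap.funLeft ℝ ℝ Fin.castSucc (embed x y)) = x := by
      ext i; simp [embed, LinearMap.funLeft]
    simp only [L₀, AffineMap.coe_sub, Pi.sub_apply, LinearMap.coe_toAffineMap,
      LinearMap.sub_apply, LinearMap.comp_apply, LinearEquiv.coe_coe, this]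
    simp [embed]
  refine ⟨A, b, L₀.comp Q, fun x hx y => ?_⟩
  have h1 := h ⟨(x, y), hx⟩
  have h2 := hM x (Metric.ball_subset_closedBall hx)
  rw [Real.norm_eq_abs, abs_le] at h2
  change L₀ (Q (iterComp _ _ (embed x y))) = 0 ↔ _
  rw [← h1, hL₀]
  simp only
  rcases le_total y (-(M + 1)) with hy | hy
  · rw [max_eq_right hy]
    constructor <;> intro <;> linarith
  · rw [max_eq_left hy]
    constructor <;> intro <;> linarith

/-- There is a constant `C = C(d, D)` such that for every admissible accuracy
`ε` there is a fully-connected ReLU network of width `d+1` and depth at most `C·(R²/ε)^(d+1)`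
whose zero contour over `B_R^d × ℝ` is the graph of a continuous function `φ̂` with
`sup |φ − φ̂| ≤ ε`. -/
theorem relu_network_eps_approximation
    (d : ℕ) (hd : 2 ≤ d) (D : ℝ) (hD : 0 ≤ D) :
    ∃ C : ℝ, ∀ R : ℝ, 0 < R →
      ∀ φ : EuclideanSpace ℝ (Fin d) → ℝ,
        ContDiffOn ℝ 2 φ (Metric.ball 0 R) →
        (∀ x ∈ Metric.ball (0 : EuclideanSpace ℝ (Fin d)) R,
          ‖iteratedFDerivWithin ℝ 2 φ (Metric.ball 0 R) x‖ ≤ D) →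
        ∀ ε : ℝ, 0 < ε →
          ε ≤ (7 * (1 + Real.sqrt 2) / Real.sqrt 2) * D * ((d : ℝ) - 1) *
            R ^ ((3 : ℝ) / 2) * (R * (1 - 1 / Real.sqrt 2)) ^ ((1 : ℝ) / 2) →
          ∃ (N : ℕ) (A : ℕ → Matrix (Fin (d+1)) (Fin (d+1)) ℝ) (b : ℕ → Fin (d+1) → ℝ)
            (L : (Fin (d+1) → ℝ) →ᵃ[ℝ] ℝ) (φhat : EuclideanSpace ℝ (Fin d) → ℝ),
            (N : ℝ) ≤ C * (R ^ 2 / ε) ^ (d + 1) ∧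
            ContinuousOn φhat (Metric.ball 0 R) ∧
            {p : EuclideanSpace ℝ (Fin d) × ℝ |
                p.1 ∈ Metric.ball (0 : EuclideanSpace ℝ (Fin d)) R ∧
                L (iterComp (fun k => reluLayer (A k) (b k)) N
                  (Fin.snoc (fun i => p.1 i) p.2)) = 0}
              = {p : EuclideanSpace ℝ (Fin d) × ℝ |
                  p.1 ∈ Metric.ball (0 : EuclideanSpace ℝ (Fin d)) R ∧ p.2 = φhat p.1} ∧
            ∀ x ∈ Metric.ball (0 : EuclideanSpace ℝ (Fin d)) R, |φ x - φhat x| ≤ ε := by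
  have hd' : (2 : ℝ) ≤ d := by exact_mod_cast hd
  -- `k` is `3 * D * q` rounded up, plus one; by `size_bound` the excess over `3 * D * q`, at most `2`,
  -- is at most `28 * D * d * q`.
  set G : ℝ := 3 * D + 28 * D * d with hG
  have hG0 : 0 ≤ G := by positivity
  refine ⟨(1 + 8 * d * (3 * d) ^ (d - 1)) * G ^ (d + 1), fun R hR φ hφ hφ2 ε hε hεle => ?_⟩
  have hsize := size_bound hd hR hε hD hεle
  set q : ℝ := R ^ 2 / ε with hq
  have hq0 : 0 < q := by positivity
  obtain ⟨k, hk2, hkD, hkG⟩ : ∃ k : ℕ, 2 ≤ k ∧ 3 * D * q ≤ k ∧ (k : ℝ) ≤ G * q := by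
    refine ⟨⌈3 * D * q⌉₊ + 1, ?_, ?_, ?_⟩
    · have : 0 < D := by
        rcases hD.eq_or_lt with h | h
        · rw [← h] at hsize; norm_num at hsize
        · exact h
      have : 0 < ⌈3 * D * q⌉₊ := Nat.ceil_pos.2 (by positivity)
      omega
    · push_cast
      linarith [Nat.le_ceil (3 * D * q)]
    · have := Nat.ceil_lt_add_one (a := 3 * D * q) (by positivity)
      push_cast
      rw [hG]
      linarith
  have hk' : (2 : ℝ) ≤ k := by exact_mod_cast hk2
  obtain ⟨S, hSlen, hSunit, hSnet⟩ := exists_net d k (by omega) (by omega)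
  obtain ⟨hder, hlip⟩ := fderiv_data hφ hφ2
  set φ' := fderivWithin ℝ φ (Metric.ball 0 R)
  set l := peels φ' (R / k ^ 2) S (4 * k ^ 2 - 8) with hl
  obtain ⟨A, b, L, hnet⟩ := network_of_cuts (R := R) l (peels_unit φ' _ hSunit _) (φ 0) (φ' 0)
  refine ⟨1 + l.length, A, b, L, fun x => φ 0 + φ' 0 (runPt l x) + runHt l x, ?_, ?_, ?_, ?_⟩
  · have hlen : 1 + l.length ≤ (1 + 8 * d * (3 * d) ^ (d - 1)) * k ^ (d + 1) := by
      rw [hl, peels_length]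
      have h1 : 1 ≤ k ^ (d + 1) := Nat.one_le_pow _ _ (by omega)
      have h2 : 2 * (d * k) + 1 ≤ 3 * d * k := by nlinarith
      have h3 : k ^ 2 * k ^ (d - 1) = k ^ (d + 1) := by
        rw [← pow_add]; congr 1; omega
      calc 1 + (4 * k ^ 2 - 8) * S.length
          ≤ k ^ (d + 1) + 4 * k ^ 2 * (2 * d * (3 * d * k) ^ (d - 1)) := by
            refine Nat.add_le_add h1 (Nat.mul_le_mul (Nat.sub_le _ _) (hSlen.trans ?_))
            gcongr
        _ = (1 + 8 * d * (3 * d) ^ (d - 1)) * k ^ (d + 1) := by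
            rw [mul_pow _ k, ← h3]; ring
    calc ((1 + l.length : ℕ) : ℝ)
        ≤ (((1 + 8 * d * (3 * d) ^ (d - 1)) * k ^ (d + 1) : ℕ) : ℝ) := by exact_mod_cast hlen
      _ = (1 + 8 * d * (3 * d) ^ (d - 1)) * (k : ℝ) ^ (d + 1) := by push_cast; ring
      _ ≤ (1 + 8 * d * (3 * d) ^ (d - 1)) * (G * q) ^ (d + 1) := by gcongr
      _ = _ := by rw [mul_pow G q, ← mul_assoc]
  · exact ((continuous_const.add ((φ' 0).continuous.comp (continuous_runPt l))).add
      (continuous_runHt l)).continuousOn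
  · ext p
    exact and_congr_right fun hp => hnet p.1 hp p.2
  · intro x hx
    refine (approx_error hR hder hD hlip hk2 hSunit hSnet (mem_ball_zero_iff.1 hx)).trans ?_
    rw [div_le_iff₀ (by linarith)]
    have : 3 * D * R ^ 2 = 3 * D * q * ε := by rw [hq]; field_simp
    rw [this, mul_comm ε]
    gcongr
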